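/- arXiv:1307.4974 — 3 statements merged into one kernel-verified Lean document; each statement's English description precedes it below -/
import Mathlib

section
/- Let K be a field (with char K ≠ 2) and let f = (f_1,...,f_m) and g = (g_1,...,g_m) be m-tuples of quadratic polynomials in K[x_1,...,x_n]. If f ~ g (i.e. there exists A in GL_n(K) with g(x) = f(A·x)), then f and g have the same number s of essential variables. Moreover, if f = f̃(ℓ_1,...,ℓ_s) and g = g̃(ℓ'_1,...,ℓ'_s) where ℓ_1,...,ℓ_s (resp. ℓ'_1,...,ℓ'_s) are linear forms in x_1,...,x_n of rank s and f̃, g̃ are m-tuples of polynomials in K[y_1,...,y_s], then f ~ g if and only if f̃ ~ g̃ (i.e. there exists à in GL_s(K) with g̃(y) = f̃(Ã·y)). -/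
open MvPolynomial

/-- Two `m`-tuples of polynomials in `n` variables are equivalent if there is an
invertible matrix `A` with `g(x) = f(A·x)`. -/
def IsLinEquiv {K : Type*} [Field K] {n m : ℕ}
    (f g : Fin m → MvPolynomial (Fin n) K) : Prop :=
  ∃ A : Matrix (Fin n) (Fin n) K, IsUnit A ∧
    ∀ i, g i = aeval (fun j => ∑ k, C (A j k) * X k) (f i)

/-- The number of essential variables of an `m`-tuple `f` of polynomials in `n`
variables: the smallest `s` such that `f = f̃(ℓ₁,…,ℓ_s)` for linear forms
`ℓ₁,…,ℓ_s` of rank `s` and `f̃` an `m`-tuple of polynomials in `s` variables. -/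
noncomputable def essNum {K : Type*} [Field K] {n m : ℕ}
    (f : Fin m → MvPolynomial (Fin n) K) : ℕ :=
  sInf {s | ∃ (L : Matrix (Fin s) (Fin n) K) (ft : Fin m → MvPolynomial (Fin s) K),
    L.rank = s ∧ ∀ i, f i = aeval (fun j => ∑ k, C (L j k) * X k) (ft i)}

/-!
Substituting linear forms is a contravariant action of matrices on polynomials. Since a matrix `M`
factors through a space of dimension `rank M`, a tuple `p(M·x)` has at most `rank M` essential
variables, so substitution never increases their number and equivalent tuples have equally many.

If `g = gt(L'·x)` is equivalent to `f = ft(L·x)` through `A`, a right inverse `R` of `L'` gives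
`gt = ft(B·y)` with `B = L A R`; minimality of `s` forces `B` to have rank `s`. Conversely, if
`gt = ft(B·y)`, then `L` and `B L'` both have independent rows, so some invertible `A` satisfies
`L A = B L'`.
-/

section LinearAlgebra

theorem exists_linearEquiv_apply_eq {ι K V : Type*} [Finite ι] [DivisionRing K] [AddCommGroup V]
    [Module K V] {v w : ι → V} (hv : LinearIndependent K v) (hw : LinearIndependent K w) :
    ∃ e : V ≃ₗ[K] V, ∀ i, e (v i) = w i := by
  have := FiniteDimensional.span_of_finite K (Set.finite_range v)
  obtain ⟨e, he⟩ := Submodule.exists_linearEquiv_restrict_eq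
    (hv.linearCombinationEquiv.symm ≪≫ₗ hw.linearCombinationEquiv)
  refine ⟨e, fun i ↦ ?_⟩
  have hvi : hv.linearCombinationEquiv (Finsupp.single i 1) =
      ⟨v i, Submodule.subset_span ⟨i, rfl⟩⟩ := by
    ext; simp
  rw [← he ⟨v i, Submodule.subset_span ⟨i, rfl⟩⟩, ← hvi]
  simp

variable {σ τ K : Type*} [Fintype τ] [Field K]

theorem linearIndependent_row_of_rank_eq_card [Fintype σ] {M : Matrix σ τ K}
    (hM : M.rank = Fintype.card σ) : LinearIndependent K M.row := by
  rw [linearIndependent_iff_card_eq_finrank_span, Set.finrank, ← M.rank_eq_finrank_span_row, hM]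

theorem exists_mul_eq_one_of_rank_eq_card [Fintype σ] [DecidableEq σ] {M : Matrix σ τ K}
    (hM : M.rank = Fintype.card σ) : ∃ N : Matrix τ σ K, M * N = 1 := by
  have hrange : LinearMap.range M.mulVecLin = ⊤ :=
    Submodule.eq_top_of_finrank_eq (hM.trans (Module.finrank_fintype_fun_eq_card K).symm)
  exact Matrix.mulVec_surjective_iff_exists_right_inverse.1 (LinearMap.range_eq_top.1 hrange)

theorem exists_isUnit_mul_eq_of_linearIndependent_row [Finite σ] [DecidableEq τ]
    {M N : Matrix σ τ K} (hM : LinearIndependent K M.row) (hN : LinearIndependent K N.row) :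
    ∃ A : Matrix τ τ K, IsUnit A ∧ M * A = N := by
  obtain ⟨e, he⟩ := exists_linearEquiv_apply_eq hM hN
  refine ⟨(LinearMap.toMatrix' e.toLinearMap).transpose, ?_, ?_⟩
  · rw [Matrix.isUnit_transpose, LinearMap.isUnit_toMatrix'_iff]
    exact (Module.End.isUnit_iff _).2 e.bijective
  · ext i k
    rw [Matrix.mul_apply_eq_vecMul, Matrix.vecMul_transpose, LinearMap.toMatrix'_mulVec]
    exact congrFun (he i) k

theorem exists_rank_factorization [Finite σ] (M : Matrix σ τ K) :
    ∃ (U : Matrix σ (Fin M.rank) K) (V : Matrix (Fin M.rank) τ K),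
      V.rank = M.rank ∧ U * V = M := by
  classical
  let b : Module.Basis (Fin M.rank) K (LinearMap.range M.mulVecLin) :=
    Module.finBasisOfFinrankEq K _ rfl
  refine ⟨LinearMap.toMatrix b (Pi.basisFun K σ) (LinearMap.range M.mulVecLin).subtype,
    LinearMap.toMatrix (Pi.basisFun K τ) b M.mulVecLin.rangeRestrict, ?_, ?_⟩
  · rw [Matrix.rank_eq_finrank_range_toLin _ b (Pi.basisFun K τ), Matrix.toLin_toMatrix,
      LinearMap.range_rangeRestrict, finrank_top, Matrix.rank]
  · rw [← LinearMap.toMatrix_comp, LinearMap.subtype_comp_codRestrict]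
    exact LinearMap.toMatrix'_toLin' M

end LinearAlgebra

section LinSubst

variable {σ τ υ R : Type*} [Fintype τ] [CommSemiring R]

/-- The linear substitution `p(y) ↦ p(M·x)`: the `j`-th variable is replaced by the linear form
whose coefficients are the `j`-th row of `M`. The images are spelled out as sums, rather than as
`M.toMvPolynomial`, so that the substitutions in `IsLinEquiv` and `essNum` are instances by
definition. -/
noncomputable def linSubst (M : Matrix σ τ R) : MvPolynomial σ R →ₐ[R] MvPolynomial τ R :=
  aeval fun j ↦ ∑ k, C (M j k) * X k

theorem linSubst_eq_bind₁ (M : Matrix σ τ R) : linSubst M = bind₁ M.toMvPolynomial := by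
  ext1 j
  simp [linSubst, Matrix.toMvPolynomial, C_mul_X_eq_monomial]

theorem linSubst_one [DecidableEq τ] (p : MvPolynomial τ R) :
    linSubst (1 : Matrix τ τ R) p = p := by
  rw [linSubst_eq_bind₁, Matrix.toMvPolynomial_one, bind₁_X_left, AlgHom.id_apply]

theorem linSubst_linSubst [Fintype υ] (M : Matrix σ τ R) (N : Matrix τ υ R)
    (p : MvPolynomial σ R) : linSubst N (linSubst M p) = linSubst (M * N) p := by
  simp only [linSubst_eq_bind₁, bind₁_bind₁, ← Matrix.toMvPolynomial_mul]

end LinSubst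

section EssNum

variable {K : Type*} [Field K] {m n s : ℕ}

theorem essNum_linSubst_le_rank {σ : Type*} [Finite σ] (M : Matrix σ (Fin n) K)
    (p : Fin m → MvPolynomial σ K) : essNum (fun i ↦ linSubst M (p i)) ≤ M.rank := by
  obtain ⟨U, V, hV, hUV⟩ := exists_rank_factorization M
  refine Nat.sInf_le ⟨V, fun i ↦ linSubst U (p i), hV, fun i ↦ ?_⟩
  change linSubst M (p i) = linSubst V (linSubst U (p i))
  rw [linSubst_linSubst, hUV]

theorem exists_rank_eq_essNum (f : Fin m → MvPolynomial (Fin n) K) :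
    ∃ (L : Matrix (Fin (essNum f)) (Fin n) K) (ft : Fin m → MvPolynomial (Fin (essNum f)) K),
      L.rank = essNum f ∧ f = fun i ↦ linSubst L (ft i) := by
  obtain ⟨L, ft, hL, hf⟩ := Nat.sInf_mem
    (s := {s | ∃ (L : Matrix (Fin s) (Fin n) K) (ft : Fin m → MvPolynomial (Fin s) K),
      L.rank = s ∧ ∀ i, f i = linSubst L (ft i)})
    ⟨n, 1, f, by simp, fun i ↦ (linSubst_one (f i)).symm⟩
  exact ⟨L, ft, hL, funext hf⟩

theorem essNum_linSubst_le (A : Matrix (Fin n) (Fin s) K) (f : Fin m → MvPolynomial (Fin n) K) :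
    essNum (fun i ↦ linSubst A (f i)) ≤ essNum f := by
  obtain ⟨L, ft, hL, hf⟩ := exists_rank_eq_essNum f
  calc essNum (fun i ↦ linSubst A (f i))
    _ = essNum (fun i ↦ linSubst (L * A) (ft i)) := by
      simp only [congrFun hf, linSubst_linSubst]
    _ ≤ (L * A).rank := essNum_linSubst_le_rank _ _
    _ ≤ L.rank := Matrix.rank_mul_le_left L A
    _ = essNum f := hL

theorem rank_eq_of_le_essNum_linSubst {L : Matrix (Fin s) (Fin n) K}
    {p : Fin m → MvPolynomial (Fin s) K} (h : s ≤ essNum (fun i ↦ linSubst L (p i))) :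
    L.rank = s :=
  L.rank_le_height.antisymm (h.trans (essNum_linSubst_le_rank L p))

theorem isLinEquiv_iff_exists_linSubst {f g : Fin m → MvPolynomial (Fin n) K} :
    IsLinEquiv f g ↔
      ∃ A : Matrix (Fin n) (Fin n) K, IsUnit A ∧ g = fun i ↦ linSubst A (f i) := by
  simp only [funext_iff]
  rfl

theorem IsLinEquiv.symm {f g : Fin m → MvPolynomial (Fin n) K} (h : IsLinEquiv f g) :
    IsLinEquiv g f := by
  obtain ⟨_, ⟨A, rfl⟩, rfl⟩ := isLinEquiv_iff_exists_linSubst.1 h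
  refine isLinEquiv_iff_exists_linSubst.2 ⟨↑A⁻¹, A⁻¹.isUnit, ?_⟩
  simp only [linSubst_linSubst, Units.mul_inv, linSubst_one]

theorem IsLinEquiv.essNum_le {f g : Fin m → MvPolynomial (Fin n) K} (h : IsLinEquiv f g) :
    essNum g ≤ essNum f := by
  obtain ⟨A, -, rfl⟩ := isLinEquiv_iff_exists_linSubst.1 h
  exact essNum_linSubst_le A f

theorem IsLinEquiv.essNum_eq {f g : Fin m → MvPolynomial (Fin n) K} (h : IsLinEquiv f g) :
    essNum f = essNum g :=
  h.symm.essNum_le.antisymm h.essNum_le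

theorem isLinEquiv_of_linSubst {L L' : Matrix (Fin s) (Fin n) K}
    {p q : Fin m → MvPolynomial (Fin s) K} (hs : s ≤ essNum (fun i ↦ linSubst L' (q i)))
    (h : IsLinEquiv (fun i ↦ linSubst L (p i)) (fun i ↦ linSubst L' (q i))) :
    IsLinEquiv p q := by
  obtain ⟨A, -, hA⟩ := isLinEquiv_iff_exists_linSubst.1 h
  obtain ⟨R, hR⟩ : ∃ R : Matrix (Fin n) (Fin s) K, L' * R = 1 :=
    exists_mul_eq_one_of_rank_eq_card <|
      (rank_eq_of_le_essNum_linSubst hs).trans (Fintype.card_fin s).symm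
  have hq : q = fun i ↦ linSubst (L * A * R) (p i) := by
    funext i
    calc q i
      _ = linSubst R (linSubst L' (q i)) := by rw [linSubst_linSubst, hR, linSubst_one]
      _ = linSubst R (linSubst A (linSubst L (p i))) := congrArg _ (congrFun hA i)
      _ = linSubst (L * A * R) (p i) := by simp only [linSubst_linSubst]
  have hrank : (L * A * R).rank = s := by
    refine rank_eq_of_le_essNum_linSubst (p := p) ?_
    rw [← hq]
    exact hs.trans (essNum_linSubst_le L' q)
  exact isLinEquiv_iff_exists_linSubst.2 ⟨L * A * R, Matrix.linearIndependent_rows_iff_isUnit.1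
    (linearIndependent_row_of_rank_eq_card (hrank.trans (Fintype.card_fin s).symm)), hq⟩

theorem isLinEquiv_linSubst {L L' : Matrix (Fin s) (Fin n) K} (hL : L.rank = s) (hL' : L'.rank = s)
    {p q : Fin m → MvPolynomial (Fin s) K} (h : IsLinEquiv p q) :
    IsLinEquiv (fun i ↦ linSubst L (p i)) (fun i ↦ linSubst L' (q i)) := by
  obtain ⟨B, hB, rfl⟩ := isLinEquiv_iff_exists_linSubst.1 h
  have hBL' : (B * L').rank = s := by
    rw [Matrix.rank_mul_eq_right_of_isUnit_det _ _ ((Matrix.isUnit_iff_isUnit_det B).1 hB), hL']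
  obtain ⟨A, hA, hLA⟩ := exists_isUnit_mul_eq_of_linearIndependent_row
    (linearIndependent_row_of_rank_eq_card (hL.trans (Fintype.card_fin s).symm))
    (linearIndependent_row_of_rank_eq_card (hBL'.trans (Fintype.card_fin s).symm))
  refine isLinEquiv_iff_exists_linSubst.2 ⟨A, hA, ?_⟩
  simp only [linSubst_linSubst, hLA]

end EssNum

theorem isLinEquiv_essNum_eq_and_iff_reduced_general {K : Type*} [Field K] {n m s : ℕ}
    (f g : Fin m → MvPolynomial (Fin n) K)
    (hs : essNum f = s)
    (L L' : Matrix (Fin s) (Fin n) K)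
    (ft gt : Fin m → MvPolynomial (Fin s) K)
    (hL : L.rank = s) (hL' : L'.rank = s)
    (hf : ∀ i, f i = aeval (fun j => ∑ k, C (L j k) * X k) (ft i))
    (hg : ∀ i, g i = aeval (fun j => ∑ k, C (L' j k) * X k) (gt i)) :
    (IsLinEquiv f g → essNum f = essNum g) ∧ (IsLinEquiv f g ↔ IsLinEquiv ft gt) := by
  obtain rfl : f = fun i ↦ linSubst L (ft i) := funext hf
  obtain rfl : g = fun i ↦ linSubst L' (gt i) := funext hg
  exact ⟨IsLinEquiv.essNum_eq, fun h ↦ isLinEquiv_of_linSubst (hs.symm.trans h.essNum_eq).le h,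
    isLinEquiv_linSubst hL hL'⟩

theorem isLinEquiv_essNum_eq_and_iff_reduced {K : Type*} [Field K]
    (hchar : ringChar K ≠ 2) {n m s : ℕ}
    (f g : Fin m → MvPolynomial (Fin n) K)
    (hfdeg : ∀ i, (f i).totalDegree ≤ 2) (hgdeg : ∀ i, (g i).totalDegree ≤ 2)
    (hs : essNum f = s)
    (L L' : Matrix (Fin s) (Fin n) K)
    (ft gt : Fin m → MvPolynomial (Fin s) K)
    (hL : L.rank = s) (hL' : L'.rank = s)
    (hf : ∀ i, f i = aeval (fun j => ∑ k, C (L j k) * X k) (ft i))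
    (hg : ∀ i, g i = aeval (fun j => ∑ k, C (L' j k) * X k) (gt i)) :
    (IsLinEquiv f g → essNum f = essNum g) ∧ (IsLinEquiv f g ↔ IsLinEquiv ft gt) :=
  isLinEquiv_essNum_eq_and_iff_reduced_general f g hs L L' ft gt hL hL' hf hg
end

section
/- Let F be an algebraically closed field with char F ≠ 2, let D in F^{n×n} be any invertible matrix, and let Z in F^{n×n} be an invertible matrix satisfying Z^T = D·Z·D^{-1}. Then there exists a matrix W in F^{n×n} such that W^2 = Z, W^T = D·W·D^{-1}, and W commutes with every matrix that commutes with Z (in particular W is a polynomial in Z). -/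
open Matrix

/-!
Let `A` be a finite commutative algebra over a separably closed field `F` in which `m` is
invertible. Modulo its nilradical, `A` is a product of residue fields; these are algebraic over
`F`, hence separably closed, so every element of `A` has an `m`-th root modulo nilpotents. For a
unit `u`, the derivative of `X ^ m - u` at such an approximate root is again a unit, so Newton
iteration makes the root exact. For `A = F[Z]` this yields a root of `Z` that is a polynomial in
`Z`, and the relation `Zᵀ * D = D * Z` passes to every polynomial in `Z`.
-/

section NthRoot

open Polynomial

theorem exists_pow_eq_of_isNilpotent_pow_sub {R : Type*} [CommRing R] {m : ℕ} {a u : R}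
    (hm : IsUnit (m : R)) (hu : IsUnit u) (h : IsNilpotent (a ^ m - u)) : ∃ b, b ^ m = u := by
  have ham : IsUnit (a ^ m) := by
    simpa using h.isUnit_add_left_of_commute hu (Commute.all _ _)
  have ha : IsUnit (a ^ (m - 1)) := isUnit_of_dvd_unit (pow_dvd_pow a (m.sub_le 1)) ham
  have h_deriv : IsUnit (aeval a (derivative (X ^ m - C u))) := by
    simpa [derivative_X_pow] using hm.mul ha
  obtain ⟨b, ⟨-, hb⟩, -⟩ :=
    existsUnique_nilpotent_sub_and_aeval_eq_zero (P := X ^ m - C u) (by simpa using h) h_deriv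
  exact ⟨b, by simpa [sub_eq_zero] using hb⟩

theorem exists_isNilpotent_pow_sub_of_forall_maximalSpectrum {R : Type*} [CommRing R]
    [IsArtinianRing R] {m : ℕ} {u : R}
    (h : ∀ I : MaximalSpectrum R, ∃ x : R ⧸ I.asIdeal, x ^ m = Ideal.Quotient.mk I.asIdeal u) :
    ∃ a : R, IsNilpotent (a ^ m - u) := by
  choose x hx using h
  let e := IsArtinianRing.quotNilradicalEquivPi R
  obtain ⟨a, ha⟩ := Ideal.Quotient.mk_surjective (e.symm x)
  refine ⟨a, ?_⟩
  rw [← mem_nilradical, ← Ideal.Quotient.eq, map_pow, ha, ← map_pow, e.symm_apply_eq]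
  exact funext hx

theorem exists_pow_eq_of_isUnit_of_isSepClosed (F : Type*) {A : Type*} [Field F] [IsSepClosed F]
    [CommRing A] [Algebra F A] [Module.Finite F A] (m : ℕ) [NeZero (m : F)] {u : A}
    (hu : IsUnit u) : ∃ b, b ^ m = u := by
  have : IsArtinianRing A := .of_finite F A
  have hm : IsUnit (m : A) := by
    simpa using (IsUnit.mk0 (m : F) (NeZero.ne _)).map (algebraMap F A)
  obtain ⟨a, ha⟩ : ∃ a : A, IsNilpotent (a ^ m - u) := by
    refine exists_isNilpotent_pow_sub_of_forall_maximalSpectrum fun I ↦ ?_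
    let _ : Field (A ⧸ I.asIdeal) := Ideal.Quotient.field I.asIdeal
    have : IsSepClosed (A ⧸ I.asIdeal) := Algebra.IsAlgebraic.isSepClosed (F := F)
    have : NeZero (m : A ⧸ I.asIdeal) := by
      simpa using NeZero.of_injective (a := (m : F)) (algebraMap F (A ⧸ I.asIdeal)).injective
    exact IsSepClosed.exists_pow_nat_eq _ m
  exact exists_pow_eq_of_isNilpotent_pow_sub hm hu ha

theorem isUnit_adjoin_singleton_self {R A : Type*} [CommRing R] [IsArtinianRing R] [Ring A]
    [Algebra R A] {a : A} (ha : IsIntegral R a) (hu : IsUnit a) :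
    IsUnit (⟨a, Algebra.self_mem_adjoin_singleton R a⟩ : Algebra.adjoin R {a}) := by
  have : Module.Finite R (Algebra.adjoin R {a}) := Algebra.finite_adjoin_simple_of_isIntegral ha
  have : IsArtinianRing (Algebra.adjoin R {a}) := .of_finite R _
  exact IsArtinianRing.isUnit_of_mem_nonZeroDivisors <|
    comap_nonZeroDivisors_le_of_injective (f := (Algebra.adjoin R {a}).val)
      Subtype.val_injective hu.mem_nonZeroDivisors

theorem exists_aeval_pow_eq_of_isIntegral_of_isUnit {F A : Type*} [Field F] [IsSepClosed F]
    [Ring A] [Algebra F A] (m : ℕ) [NeZero (m : F)] {a : A} (ha : IsIntegral F a)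
    (hu : IsUnit a) : ∃ q : F[X], aeval a q ^ m = a := by
  have : Module.Finite F (Algebra.adjoin F {a}) := Algebra.finite_adjoin_simple_of_isIntegral ha
  obtain ⟨b, hb⟩ := exists_pow_eq_of_isUnit_of_isSepClosed F m (isUnit_adjoin_singleton_self ha hu)
  obtain ⟨q, hq⟩ := Algebra.adjoin_mem_exists_aeval F a b.2
  exact ⟨q, by simpa [hq] using congrArg Subtype.val hb⟩

end NthRoot

section Intertwining

open Polynomial

theorem semiconjBy_aeval {R A : Type*} [CommSemiring R] [Semiring A] [Algebra R A] {d a b : A}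
    (h : SemiconjBy d a b) (q : R[X]) : SemiconjBy d (aeval a q) (aeval b q) := by
  induction q using Polynomial.induction_on' with
  | add p q hp hq => simpa using hp.add_right hq
  | monomial k r =>
    simpa using SemiconjBy.mul_right (Algebra.commutes r d).symm (h.pow_right k)

theorem transpose_aeval {R S ι : Type*} [CommSemiring R] [CommSemiring S] [Algebra R S]
    [Fintype ι] [DecidableEq ι] (M : Matrix ι ι S) (q : R[X]) : (aeval M q)ᵀ = aeval Mᵀ q := by
  induction q using Polynomial.induction_on' with
  | add p q hp hq => simp [hp, hq]
  | monomial k r => simp [aeval_monomial, ← Algebra.smul_def]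

theorem eq_mul_mul_inv_iff {R ι : Type*} [CommRing R] [Fintype ι] [DecidableEq ι]
    {D M N : Matrix ι ι R} (hD : IsUnit D) :
    N = D * M * D⁻¹ ↔ N * D = D * M := by
  let _ := hD.invertible
  exact eq_comm.trans <| (mul_inv_eq_iff_eq_mul_of_invertible _ _ _).trans eq_comm

end Intertwining

theorem exists_sqrt_in_jordan_algebra_general {F ι : Type*} [Field F] [IsSepClosed F] [Fintype ι]
    [DecidableEq ι] (m : ℕ) [NeZero (m : F)] (D Z : Matrix ι ι F) (hZ : IsUnit Z)
    (hZD : Zᵀ * D = D * Z) :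
    ∃ W : Matrix ι ι F, W ^ m = Z ∧ Wᵀ * D = D * W ∧
      (∀ B : Matrix ι ι F, B * Z = Z * B → B * W = W * B) ∧
      ∃ q : Polynomial F, W = Polynomial.aeval Z q := by
  obtain ⟨q, hq⟩ :=
    exists_aeval_pow_eq_of_isIntegral_of_isUnit m (Algebra.IsIntegral.isIntegral (R := F) Z) hZ
  have h_adj : SemiconjBy D Z Zᵀ := hZD.symm
  refine ⟨Polynomial.aeval Z q, hq, ?_, fun B hB ↦ semiconjBy_aeval hB q, q, rfl⟩
  rw [transpose_aeval]
  exact (semiconjBy_aeval h_adj q).eq.symm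

/-- If `Z` is invertible and lies in the Jordan algebra of an invertible matrix `D`
(i.e. `Zᵀ = D·Z·D⁻¹`), then over an algebraically closed field of characteristic ≠ 2
it has a square root `W` in the Jordan algebra of `D` which commutes with every
matrix commuting with `Z` (indeed, `W` is a polynomial in `Z`). -/
theorem exists_sqrt_in_jordan_algebra {F : Type*} [Field F] [IsAlgClosed F]
    (hchar : ringChar F ≠ 2) {n : ℕ}
    (D Z : Matrix (Fin n) (Fin n) F) (hD : IsUnit D) (hZ : IsUnit Z)
    (hZD : Zᵀ = D * Z * D⁻¹) :
    ∃ W : Matrix (Fin n) (Fin n) F, W ^ 2 = Z ∧ Wᵀ = D * W * D⁻¹ ∧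
      (∀ B : Matrix (Fin n) (Fin n) F, B * Z = Z * B → B * W = W * B) ∧
      ∃ q : Polynomial F, W = Polynomial.aeval Z q := by
  have : NeZero ((2 : ℕ) : F) := ⟨by exact_mod_cast Ring.two_ne_zero hchar⟩
  simp only [eq_mul_mul_inv_iff hD] at hZD ⊢
  exact exists_sqrt_in_jordan_algebra_general 2 D Z hZ hZD
end

section
/- Let K be a field with char K = 2, let ζ in K, let d ≥ 1, and let J = J_{ζ,d} be the Jordan block of size d with eigenvalue ζ. Then (J^2 − ζ^2·I)^⌈d/2⌉ = 0, and (J^2 − ζ^2·I)^e ≠ 0 for every integer e with 0 ≤ e < ⌈d/2⌉. Consequently ζ^2 is the only eigenvalue of J^2, its geometric multiplicity is 2 when d ≥ 2, and the Jordan normal form of J^2 consists of two Jordan blocks of sizes ⌈d/2⌉ and ⌊d/2⌋ when d ≥ 2. -/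
/-!
Write `N = J_{0,d}`, so that `J = ζ + N`. The Frobenius gives `J² - ζ² = N²`, and `Nᵏ` shifts
coordinates by `k`: it vanishes iff `k ≥ d`, and its kernel is spanned by the first `min k d` basis
vectors. Since `N²` preserves the parity of the index, listing the even indices before the odd ones
splits `J²` into two Jordan blocks.
-/

open Matrix

/-- The Jordan block of size `s` with eigenvalue `ζ`: `ζ` on the diagonal, `1` on the
superdiagonal, `0` elsewhere. -/
def jordanBlock {L : Type*} [Field L] (ζ : L) (s : ℕ) : Matrix (Fin s) (Fin s) L :=
  Matrix.of fun i j =>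
    if (j : ℕ) = (i : ℕ) then ζ else if (j : ℕ) = (i : ℕ) + 1 then 1 else 0

section Frobenius

variable {K : Type*} [Field K]

theorem jordanBlock_eq_smul_one_add (ζ : K) (d : ℕ) :
    jordanBlock ζ d = ζ • 1 + jordanBlock 0 d := by
  ext i j
  by_cases h : i = j <;> simp [jordanBlock, h, Fin.val_inj, eq_comm]

theorem jordanBlock_pow_expChar_sub (p : ℕ) [ExpChar K p] (ζ : K) (d : ℕ) :
    jordanBlock ζ d ^ p - ζ ^ p • 1 = jordanBlock 0 d ^ p := by
  cases isEmpty_or_nonempty (Fin d)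
  · exact Subsingleton.elim _ _
  have : ExpChar (Matrix (Fin d) (Fin d) K) p :=
    expChar_of_injective_algebraMap (algebraMap K _).injective p
  have hcomm : Commute (ζ • (1 : Matrix (Fin d) (Fin d) K)) (jordanBlock 0 d) :=
    (Commute.one_left _).smul_left ζ
  rw [jordanBlock_eq_smul_one_add, add_pow_expChar_of_commute p hcomm, smul_pow, one_pow,
    add_sub_cancel_left]

end Frobenius

section NilpotentBlock

variable {K : Type*} [Field K] {d k : ℕ}

theorem jordanBlock_zero_mulVec_apply (v : Fin d → K) (i : Fin d) :
    (jordanBlock 0 d *ᵥ v) i = if h : (i : ℕ) + 1 < d then v ⟨i + 1, h⟩ else 0 := by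
  have hentry (j : Fin d) : jordanBlock (0 : K) d i j = if (j : ℕ) = i + 1 then 1 else 0 := by
    simp only [jordanBlock, Matrix.of_apply]
    split_ifs <;> first | rfl | omega
  simp only [Matrix.mulVec, dotProduct, hentry, ite_mul, one_mul, zero_mul]
  split_ifs with h
  · rw [Fintype.sum_eq_single ⟨i + 1, h⟩ fun j hj => if_neg (mt Fin.ext hj), if_pos rfl]
  · exact Finset.sum_eq_zero fun j _ => if_neg (by omega)

theorem jordanBlock_zero_pow_mulVec_apply (k : ℕ) (v : Fin d → K) (i : Fin d) :
    (jordanBlock 0 d ^ k *ᵥ v) i = if h : (i : ℕ) + k < d then v ⟨i + k, h⟩ else 0 := by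
  induction k generalizing v with
  | zero => simp
  | succ k ih =>
    rw [pow_succ, ← Matrix.mulVec_mulVec, ih]
    simp only [jordanBlock_zero_mulVec_apply]
    split_ifs <;> first | rfl | omega

theorem jordanBlock_zero_pow_apply (k : ℕ) (i j : Fin d) :
    (jordanBlock (0 : K) d ^ k) i j = if (j : ℕ) = i + k then 1 else 0 := by
  have hcol := jordanBlock_zero_pow_mulVec_apply k (Pi.single j (1 : K)) i
  rw [Matrix.mulVec_single_one, Matrix.col_apply] at hcol
  simp only [hcol, Pi.single_apply, Fin.ext_iff]
  split_ifs <;> first | rfl | omega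

theorem jordanBlock_zero_pow_eq_zero_iff : jordanBlock (0 : K) d ^ k = 0 ↔ d ≤ k := by
  constructor
  · intro h
    by_contra! hk
    have hentry := jordanBlock_zero_pow_apply (K := K) k ⟨0, by omega⟩ ⟨k, hk⟩
    simp [h] at hentry
  · intro hk
    ext i j
    rw [jordanBlock_zero_pow_apply, if_neg (by omega), Matrix.zero_apply]

theorem mem_ker_jordanBlock_zero_pow {v : Fin d → K} :
    v ∈ LinearMap.ker (Matrix.toLin' (jordanBlock 0 d ^ k)) ↔ ∀ i : Fin d, k ≤ i → v i = 0 := by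
  simp only [LinearMap.mem_ker, Matrix.toLin'_apply, funext_iff, Pi.zero_apply,
    jordanBlock_zero_pow_mulVec_apply, dite_eq_right_iff]
  constructor
  · intro h i hi
    simpa [Nat.sub_add_cancel hi] using h ⟨i - k, by omega⟩ (by simp [Nat.sub_add_cancel hi])
  · exact fun h i hi => h _ (Nat.le_add_left k i)

theorem finrank_ker_jordanBlock_zero_pow :
    Module.finrank K (LinearMap.ker (Matrix.toLin' (jordanBlock (0 : K) d ^ k))) = min d k := by
  let low : Set (Fin d) := {i | (i : ℕ) < k}
  have hker : LinearMap.ker (Matrix.toLin' (jordanBlock (0 : K) d ^ k)) =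
      ⨅ i ∈ lowᶜ, LinearMap.ker (LinearMap.proj i) := by
    ext v
    rw [mem_ker_jordanBlock_zero_pow]
    simp [low]
  have e := LinearMap.iInfKerProjEquiv K (fun _ : Fin d => K) (disjoint_compl_right (a := low))
    (Set.union_compl_self low).ge
  rw [hker, e.finrank_eq, Module.finrank_fintype_fun_eq_card, Fintype.card_subtype]
  exact Fin.card_filter_val_lt

end NilpotentBlock

section Eigenvalues

theorem hasEigenvalue_iff_eq_of_isNilpotent_sub {R M : Type*} [CommRing R] [IsDomain R]
    [AddCommGroup M] [Module R M] [Module.IsTorsionFree R M] [Nontrivial M]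
    {f : Module.End R M} {a μ : R} (hf : IsNilpotent (f - algebraMap R (Module.End R M) a)) :
    f.HasEigenvalue μ ↔ μ = a := by
  obtain ⟨n, hn⟩ := hf
  have htop : f.genEigenspace a n = ⊤ := by
    rw [Module.End.genEigenspace_nat, ← Algebra.algebraMap_eq_smul_one, hn, LinearMap.ker_zero]
  constructor
  · intro hμ
    by_contra hne
    have hdisj := f.disjoint_genEigenspace hne 1 n
    rw [htop, disjoint_top] at hdisj
    exact hμ hdisj
  · rintro rfl
    have hgen : f.HasGenEigenvalue μ n := by
      rw [Module.End.hasGenEigenvalue_iff, htop]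
      exact top_ne_bot
    exact Module.End.hasEigenvalue_of_hasGenEigenvalue hgen

variable {K : Type*} [Field K] {d : ℕ} (p : ℕ) [ExpChar K p]

theorem toLin'_jordanBlock_pow_expChar_sub (ζ : K) :
    Matrix.toLin' (jordanBlock ζ d ^ p) - algebraMap K (Module.End K (Fin d → K)) (ζ ^ p) =
      Matrix.toLin' (jordanBlock 0 d ^ p) := by
  rw [← jordanBlock_pow_expChar_sub p ζ d, map_sub, map_smul, Matrix.toLin'_one,
    Algebra.algebraMap_eq_smul_one, Module.End.one_eq_id]

theorem hasEigenvalue_jordanBlock_pow_expChar_iff (hd : d ≠ 0) {ζ μ : K} :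
    Module.End.HasEigenvalue (Matrix.toLin' (jordanBlock ζ d ^ p)) μ ↔ μ = ζ ^ p := by
  have : Nonempty (Fin d) := Fin.pos_iff_nonempty.mp (Nat.pos_of_ne_zero hd)
  refine hasEigenvalue_iff_eq_of_isNilpotent_sub ⟨d, ?_⟩
  rw [toLin'_jordanBlock_pow_expChar_sub, ← Matrix.toLin'_pow, ← pow_mul,
    jordanBlock_zero_pow_eq_zero_iff.mpr (Nat.le_mul_of_pos_left d (expChar_pos K p)), map_zero]

theorem finrank_eigenspace_jordanBlock_pow_expChar (ζ : K) :
    Module.finrank K (Module.End.eigenspace (Matrix.toLin' (jordanBlock ζ d ^ p)) (ζ ^ p)) =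
      min d p := by
  rw [Module.End.eigenspace_def, ← Algebra.algebraMap_eq_smul_one,
    toLin'_jordanBlock_pow_expChar_sub, finrank_ker_jordanBlock_zero_pow]

end Eigenvalues

section JordanForm

theorem permMatrixHom_inv_mul_mul_permMatrixHom {n R : Type*} [Fintype n] [DecidableEq n]
    [CommRing R] (σ : Equiv.Perm n) (A : Matrix n n R) :
    (permMatrixHom σ)⁻¹ * A * permMatrixHom σ = A.submatrix σ σ := by
  have hinv : (permMatrixHom σ : Matrix n n R)⁻¹ = permMatrixHom σ⁻¹ :=
    Matrix.inv_eq_left_inv (by rw [← map_mul, inv_mul_cancel, map_one])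
  rw [hinv, permMatrixHom_apply, permMatrixHom_apply, inv_inv, PEquiv.toMatrix_toPEquiv_mul,
    PEquiv.mul_toMatrix_toPEquiv, Matrix.submatrix_submatrix]
  rfl

/-- The enumeration of `Fin d` listing the even indices first, then the odd ones. It is the
permutation of the basis that brings the square of a Jordan block to block-diagonal form. -/
def evenOddEquiv (d : ℕ) : Fin ((d + 1) / 2) ⊕ Fin (d / 2) ≃ Fin d where
  toFun := Sum.elim (fun k => ⟨2 * k, by omega⟩) (fun k => ⟨2 * k + 1, by omega⟩)
  invFun i := if h : (i : ℕ) % 2 = 0 then .inl ⟨i / 2, by omega⟩ else .inr ⟨i / 2, by omega⟩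
  left_inv := by
    rintro (k | k)
    · simp
    · simp [Fin.ext_iff]; omega
  right_inv i := by
    dsimp only
    split_ifs <;> simp only [Sum.elim_inl, Sum.elim_inr, Fin.ext_iff] <;> omega

variable {K : Type*} [Field K]

theorem jordanBlock_zero_sq_submatrix_evenOddEquiv (d : ℕ) :
    (jordanBlock (0 : K) d ^ 2).submatrix (evenOddEquiv d) (evenOddEquiv d) =
      Matrix.fromBlocks (jordanBlock 0 ((d + 1) / 2)) 0 0 (jordanBlock 0 (d / 2)) := by
  rw [← pow_one (jordanBlock 0 ((d + 1) / 2)), ← pow_one (jordanBlock 0 (d / 2))]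
  ext (i | i) (j | j) <;>
    simp only [Matrix.submatrix_apply, jordanBlock_zero_pow_apply, Matrix.fromBlocks_apply₁₁,
      Matrix.fromBlocks_apply₁₂, Matrix.fromBlocks_apply₂₁, Matrix.fromBlocks_apply₂₂,
      Matrix.zero_apply, evenOddEquiv, Equiv.coe_fn_mk, Sum.elim_inl, Sum.elim_inr] <;>
    split_ifs <;> first | rfl | omega

theorem jordanBlock_sq_submatrix_evenOddEquiv [CharP K 2] (ζ : K) (d : ℕ) :
    (jordanBlock ζ d ^ 2).submatrix (evenOddEquiv d) (evenOddEquiv d) =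
      Matrix.fromBlocks (jordanBlock (ζ ^ 2) ((d + 1) / 2)) 0 0
        (jordanBlock (ζ ^ 2) (d / 2)) := by
  rw [← sub_add_cancel (jordanBlock ζ d ^ 2) (ζ ^ 2 • 1), jordanBlock_pow_expChar_sub,
    Matrix.submatrix_add, Matrix.submatrix_smul, Pi.add_apply, Pi.add_apply, Pi.smul_apply,
    Pi.smul_apply, jordanBlock_zero_sq_submatrix_evenOddEquiv, Matrix.submatrix_one_equiv,
    ← Matrix.fromBlocks_one, Matrix.fromBlocks_smul, Matrix.fromBlocks_add,
    jordanBlock_eq_smul_one_add (ζ ^ 2) ((d + 1) / 2), jordanBlock_eq_smul_one_add (ζ ^ 2) (d / 2)]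
  simp only [smul_zero, add_zero, add_comm]

theorem exists_isUnit_inv_mul_jordanBlock_sq_mul_eq_reindex [CharP K 2] (ζ : K) {d : ℕ}
    (e : Fin ((d + 1) / 2) ⊕ Fin (d / 2) ≃ Fin d) :
    ∃ T : Matrix (Fin d) (Fin d) K, IsUnit T ∧
      T⁻¹ * jordanBlock ζ d ^ 2 * T =
        Matrix.reindex e e (Matrix.fromBlocks (jordanBlock (ζ ^ 2) ((d + 1) / 2)) 0 0
          (jordanBlock (ζ ^ 2) (d / 2))) := by
  let σ : Equiv.Perm (Fin d) := e.symm.trans (evenOddEquiv d)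
  refine ⟨permMatrixHom σ, (Group.isUnit σ).map permMatrixHom, ?_⟩
  rw [permMatrixHom_inv_mul_mul_permMatrixHom, ← jordanBlock_sq_submatrix_evenOddEquiv,
    Matrix.reindex_apply, Matrix.submatrix_submatrix]
  rfl

end JordanForm

/-- In characteristic 2, for the Jordan block `J = J_{ζ,d}`:
`(J² − ζ²·I)^⌈d/2⌉ = 0` and `(J² − ζ²·I)^e ≠ 0` for `e < ⌈d/2⌉`; consequently `ζ²`
is the only eigenvalue of `J²`, its geometric multiplicity is `2` when `d ≥ 2`, and
the Jordan normal form of `J²` consists of two blocks of sizes `⌈d/2⌉` and `⌊d/2⌋`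
when `d ≥ 2`. -/
theorem char_two_jordanBlock_sq {K : Type*} [Field K]
    (hchar : ringChar K = 2) (ζ : K) {d : ℕ} (hd : 1 ≤ d) :
    (jordanBlock ζ d ^ 2 - (ζ ^ 2) • (1 : Matrix (Fin d) (Fin d) K)) ^ ((d + 1) / 2) = 0 ∧
    (∀ e : ℕ, e < (d + 1) / 2 →
      (jordanBlock ζ d ^ 2 - (ζ ^ 2) • (1 : Matrix (Fin d) (Fin d) K)) ^ e ≠ 0) ∧
    (∀ μ : K,
      Module.End.HasEigenvalue (Matrix.toLin' (jordanBlock ζ d ^ 2)) μ ↔ μ = ζ ^ 2) ∧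
    (2 ≤ d →
      Module.finrank K
        (Module.End.eigenspace (Matrix.toLin' (jordanBlock ζ d ^ 2)) (ζ ^ 2)) = 2) ∧
    (2 ≤ d → ∃ T : Matrix (Fin d) (Fin d) K, IsUnit T ∧
      T⁻¹ * (jordanBlock ζ d ^ 2) * T =
        Matrix.reindex (finSumFinEquiv.trans (finCongr (by omega)))
          (finSumFinEquiv.trans (finCongr (by omega)))
          (Matrix.fromBlocks (jordanBlock (ζ ^ 2) ((d + 1) / 2)) 0 0
            (jordanBlock (ζ ^ 2) (d / 2)))) := by
  have : CharP K 2 := ringChar.of_eq hchar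
  rw [jordanBlock_pow_expChar_sub]
  refine ⟨?_, ?_, fun μ => ?_, fun hd2 => ?_, fun _ => ?_⟩
  · rw [← pow_mul, jordanBlock_zero_pow_eq_zero_iff]
    omega
  · intro e he
    rw [← pow_mul, Ne, jordanBlock_zero_pow_eq_zero_iff]
    omega
  · exact hasEigenvalue_jordanBlock_pow_expChar_iff 2 (Nat.one_le_iff_ne_zero.mp hd)
  · rw [finrank_eigenspace_jordanBlock_pow_expChar, min_eq_right hd2]
  · exact exists_isUnit_inv_mul_jordanBlock_sq_mul_eq_reindex ζ _
end
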